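/- Injectivity of the randomized encoding in its randomness: fix a matrix M ∈ F_2^{q×m} and an input x ∈ F_2^m. Then the map (r, s) ↦ RE_M(x; r, s) is injective: if RE_M(x; r, s) = RE_M(x; r', s') then r = r' and s = s'. Concretely, the w-part determines r via r_{j,i} = x_j ⊕ a_{j,i}(w), and then each row of s is determined from the corresponding row of z by the recurrence s_{i,j} = z_{i,j} ⊕ s_{i,j−1} ⊕ M_{i,j}·r_{j,i} with s_{i,0} = 0. -/

import Mathlib

open Finset

/-- Boundary-extended horizontal mask: `sBext m s i k` is the 1-based `s_{i,k}`
for `k ∈ {1,…,m-1}`, with the boundary convention `s_{i,0} = s_{i,m} = 0`. -/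
def sBext (m : ℕ) {q : ℕ} (s : Fin q → Fin (m - 1) → ZMod 2) (i : Fin q) (k : ℕ) :
    ZMod 2 :=
  if h : 1 ≤ k ∧ k ≤ m - 1 then s i ⟨k - 1, by omega⟩ else 0

/-- `REw x r j i` is the output bit `w_{j+1,i}` (1-based column `j+1`, `w`-index
`i ∈ {0,…,q-1}`): `w_{j,0} = x_j ⊕ r_{j,1}` and `w_{j,i} = r_{j,i} ⊕ r_{j,i+1}`;
here `r j i` denotes `r_{j+1,i+1}` in the 1-based notation. -/
def REw {m q : ℕ} (x : Fin m → ZMod 2) (r : Fin m → Fin q → ZMod 2) :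
    Fin m → Fin q → ZMod 2 :=
  fun j i =>
    (if (i : ℕ) = 0 then x j
      else r j ⟨(i : ℕ) - 1, Nat.lt_of_le_of_lt (Nat.sub_le _ _) i.isLt⟩) + r j i

/-- `REz M r s i j` is the output bit `z_{i+1,j+1}` (1-based):
`z_{i,j} = s_{i,j-1} ⊕ s_{i,j} ⊕ M_{i,j}·r_{j,i}`. -/
def REz {m q : ℕ} (M : Fin q → Fin m → ZMod 2) (r : Fin m → Fin q → ZMod 2)
    (s : Fin q → Fin (m - 1) → ZMod 2) : Fin q → Fin m → ZMod 2 :=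
  fun i j => sBext m s i (j : ℕ) + sBext m s i ((j : ℕ) + 1) + M i j * r j i

/-- `aFun w j i = w_{j,0} ⊕ ⋯ ⊕ w_{j,i}` (0-based `i : Fin q`), i.e. the prefix
parity `a_{j,i+1}` in the 1-based notation of the paper. -/
def aFun {m q : ℕ} (w : Fin m → Fin q → ZMod 2) (j : Fin m) (i : Fin q) : ZMod 2 :=
  ∑ k ∈ Finset.Iic i, w j k

/-! In characteristic two, the `j`-th row of `w` is the sequence of successive differences of
`x_j, r_{j,1}, …, r_{j,q}`, so its prefix sums telescope and recover `r` from `w` and `x`.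
Once `r` is known, `z` determines each row of `s` by a first-order recurrence starting at
`s_{i,0} = 0`. -/

section

variable {m q : ℕ} (M : Fin q → Fin m → ZMod 2) (x : Fin m → ZMod 2)
  (r : Fin m → Fin q → ZMod 2) (s : Fin q → Fin (m - 1) → ZMod 2)

/-- The column mask `r_{j,1}, …, r_{j,q}` extended by the convention `r_{j,0} = x_j`, so that
`w_{j,i} = r_{j,i} ⊕ r_{j,i+1}` holds for `i = 0` as well. -/
def rExt (j : Fin m) : Fin (q + 1) → ZMod 2 :=
  Fin.cons (x j) (r j)

theorem REw_eq_rExt_sub (j : Fin m) (i : Fin q) :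
    REw x r j i = rExt x r j i.succ - rExt x r j i.castSucc := by
  rw [CharTwo.sub_eq_add, add_comm]
  obtain ⟨_ | n, hn⟩ := i <;> rfl

theorem aFun_REw (j : Fin m) (i : Fin q) : aFun (REw x r) j i = r j i - x j := by
  simp only [aFun, REw_eq_rExt_sub]
  exact Fin.sum_Iic_sub i (rExt x r j)

theorem eq_add_aFun_REw (j : Fin m) (i : Fin q) : r j i = x j + aFun (REw x r) j i := by
  rw [aFun_REw, add_sub_cancel]

theorem REw_injective :
    Function.Injective (REw x : (Fin m → Fin q → ZMod 2) → Fin m → Fin q → ZMod 2) := by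
  intro r r' hw
  funext j i
  rw [eq_add_aFun_REw x r, hw, ← eq_add_aFun_REw x r']

theorem sBext_zero (i : Fin q) : sBext m s i 0 = 0 :=
  rfl

theorem sBext_succ (i : Fin q) (k : Fin (m - 1)) : sBext m s i (k + 1) = s i k :=
  dif_pos ⟨Nat.succ_pos _, k.isLt⟩

theorem sBext_succ_eq_REz_add (i : Fin q) (j : Fin m) :
    sBext m s i (j + 1) = REz M r s i j + sBext m s i j + M i j * r j i := by
  grind [REz, CharTwo.add_self_eq_zero]

variable {M r s} in
theorem sBext_eq_of_REz_eq {s' : Fin q → Fin (m - 1) → ZMod 2} {i : Fin q}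
    (hz : REz M r s i = REz M r s' i) {k : ℕ} (hk : k ≤ m) : sBext m s i k = sBext m s' i k := by
  induction k with
  | zero => rw [sBext_zero, sBext_zero]
  | succ n ih =>
    let j : Fin m := ⟨n, hk⟩
    calc
      sBext m s i (n + 1) = REz M r s i j + sBext m s i n + M i j * r j i :=
        sBext_succ_eq_REz_add M r s i j
      _ = REz M r s' i j + sBext m s' i n + M i j * r j i := by
        rw [hz, ih (Nat.le_of_succ_le hk)]
      _ = sBext m s' i (n + 1) := (sBext_succ_eq_REz_add M r s' i j).symm

theorem REz_injective : Function.Injective (REz M r) := by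
  intro s s' hz
  funext i k
  rw [← sBext_succ s i k, sBext_eq_of_REz_eq (congrFun hz i) (by omega), sBext_succ]

end

/-- Injectivity of the randomized encoding in its
randomness: for fixed `M` and input `x`, if `RE_M(x; r, s) = RE_M(x; r', s')`
then `r = r'` and `s = s'`. -/
theorem injective_in_randomness {m q : ℕ} (hm : 1 ≤ m) (hq : 1 ≤ q)
    (M : Fin q → Fin m → ZMod 2) (x : Fin m → ZMod 2)
    (r r' : Fin m → Fin q → ZMod 2) (s s' : Fin q → Fin (m - 1) → ZMod 2)
    (hw : REw x r = REw x r') (hz : REz M r s = REz M r' s') :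
    r = r' ∧ s = s' := by
  obtain rfl : r = r' := REw_injective x hw
  exact ⟨rfl, REz_injective M r hz⟩
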